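/- Let p > 3 be prime. Then the sum over k from 0 to (p−1)/2 of (4k+1) · ((1/2)_k)^4 / (k!)^4 is congruent to p modulo p^3, where (1/2)_k = (1/2)(3/2)···((2k−1)/2) is the Pochhammer symbol. -/

import Mathlib

/-- The rising factorial (Pochhammer symbol) `(1/2)_k = (1/2)(3/2)⋯((2k-1)/2)` in ℚ. -/
def halfPoch (k : ℕ) : ℚ := ∏ i ∈ Finset.range k, ((1 : ℚ) / 2 + i)

/-!
Put `W_b = (b)_k / (1 + a - b)_k`, `δ = a + n` and `S(b, c, d) = ∑ (a + 2k) W_a W_b W_c W_d`, summed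
over `k ≤ n`. For `a = 1/2` and `n = (p - 1)/2` the sum in question is `2 S(a, a, a)`, and
`δ = p/2`. Dougall's `₅F₄` theorem evaluates `S(b, c, -n)`, where `-n = a - δ`.

In particular `S(a, a + δ, a - δ) = δ (2a)_n / n!`, so it is enough to see that
`∑ (a + 2k) W_a² (W_a² - W_{a+δ} W_{a-δ})` vanishes modulo `δ³`. The last factor is even in `δ`,
hence divisible by `δ²`, and `W_a ≡ W_{a-δ}` modulo `δ`; so one of the two outer factors `W_a` may
be replaced by `W_{a-δ}`. This turns the sum into `S(a, a, -n) - S(a + δ, a - δ, -n)`. By Dougall's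
theorem `S(a + y, a - y, -n) = δ (a)_n (1 - a)_n / ((1 - y)_n (1 + y)_n)`, which is `δ` times an
even function of `y`, so its values at `y = 0` and `y = δ` agree modulo `δ³`.
-/

open Polynomial Finset

section Pochhammer

lemma mul_ascPochhammer_eval_add_one {R : Type*} [CommSemiring R] (x : R) (k : ℕ) :
    x * (ascPochhammer R k).eval (x + 1) = (ascPochhammer R k).eval x * (x + k) := by
  rw [← ascPochhammer_succ_eval, ascPochhammer_succ_left]
  simp

variable {R : Type*} [CommRing R]

lemma ascPochhammer_eval_one_sub_sub (x : R) (k : ℕ) :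
    (ascPochhammer R k).eval (1 - x - k) = (-1) ^ k * (ascPochhammer R k).eval x := by
  rw [show 1 - x - k = -(x + k - 1) by ring, ascPochhammer_eval_neg_eq_descPochhammer,
    descPochhammer_eval_eq_ascPochhammer]
  congr 2
  ring

lemma add_natCast_ne_zero_of_ascPochhammer_eval_ne_zero [IsDomain R] {x : R} {n i : ℕ}
    (hx : (ascPochhammer R n).eval x ≠ 0) (hi : i < n) : x + i ≠ 0 := fun h ↦
  hx <| (ascPochhammer_eval_eq_zero_iff n x).2 ⟨i, hi, eq_neg_of_add_eq_zero_right h⟩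

end Pochhammer

section WellPoised

variable {K : Type*} [Field K]

/-- The quotient `(b)_k / (1 + a - b)_k` through which a numerator parameter `b` enters the `k`-th
term of a hypergeometric series that is well-poised with respect to `a`. The parameter `b = a`
gives `(a)_k / k!`. The value is `0` where the denominator vanishes. -/
noncomputable def wellPoisedRatio (a b : K) (k : ℕ) : K :=
  (ascPochhammer K k).eval b / (ascPochhammer K k).eval (1 + a - b)

lemma wellPoisedRatio_zero (a b : K) : wellPoisedRatio a b 0 = 1 := by
  simp [wellPoisedRatio]

lemma wellPoisedRatio_succ (a b : K) (k : ℕ) :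
    wellPoisedRatio a b (k + 1) = wellPoisedRatio a b k * ((b + k) / (1 + a - b + k)) := by
  simp only [wellPoisedRatio, ascPochhammer_succ_eval, mul_div_mul_comm]

lemma wellPoisedRatio_self (a : K) (k : ℕ) :
    wellPoisedRatio a a k = (ascPochhammer K k).eval a / k.factorial := by
  rw [wellPoisedRatio, add_sub_cancel_right, ascPochhammer_eval_one]

lemma wellPoisedRatio_add (a y : K) (k : ℕ) :
    wellPoisedRatio a (a + y) k =
      (ascPochhammer K k).eval (a + y) / (ascPochhammer K k).eval (1 - y) := by
  rw [wellPoisedRatio, add_comm 1 a, add_sub_add_left_eq_sub]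

lemma wellPoisedRatio_neg_natCast_of_lt (a : K) {n k : ℕ} (h : n < k) :
    wellPoisedRatio a (-n) k = 0 := by
  rw [wellPoisedRatio, ascPochhammer_eval_neg_coe_nat_of_lt h, zero_div]

lemma wellPoisedRatio_add_one_mul {a b : K} {k : ℕ}
    (h : (ascPochhammer K (k + 1)).eval (a - b) ≠ 0) :
    wellPoisedRatio a (b + 1) k * (b * (a - b)) =
      wellPoisedRatio a b k * ((b + k) * (a - b + k)) := by
  have numerator := mul_ascPochhammer_eval_add_one b k
  have denominator := mul_ascPochhammer_eval_add_one (a - b) k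
  rw [ascPochhammer_succ_eval] at h
  have h' : (ascPochhammer K k).eval (a - b + 1) ≠ 0 :=
    right_ne_zero_of_mul (denominator ▸ h)
  rw [wellPoisedRatio, wellPoisedRatio, show 1 + a - (b + 1) = a - b by ring,
    show 1 + a - b = a - b + 1 by ring, div_mul_eq_mul_div, div_mul_eq_mul_div,
    div_eq_div_iff (left_ne_zero_of_mul h) h']
  linear_combination (ascPochhammer K k).eval (a - b + 1) * (a - b) * numerator
    + (ascPochhammer K k).eval b * (b + k) * denominator

/-- The `k`-th term of Dougall's terminating very-well-poised `₅F₄(1)` series with parameters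
`a, b, c, -n`. It is normalised by the factor `a + 2k` instead of the customary `(a + 2k) / a`. -/
noncomputable def dougallTerm (a b c : K) (n k : ℕ) : K :=
  (a + 2 * k) * (wellPoisedRatio a a k * wellPoisedRatio a b k * wellPoisedRatio a c k *
    wellPoisedRatio a (-n) k)

lemma sum_wellPoisedRatio_pow_four_sub_sum_dougallTerm (a c : K) (n : ℕ) :
    ∑ k ∈ range (n + 1), (a + 2 * k) * wellPoisedRatio a a k ^ 4 -
        ∑ k ∈ range (n + 1), dougallTerm a a c n k =
      ∑ k ∈ range (n + 1), (a + 2 * k) * wellPoisedRatio a a k *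
        ((wellPoisedRatio a a k - wellPoisedRatio a (-n) k) *
          (wellPoisedRatio a a k ^ 2 - wellPoisedRatio a c k * wellPoisedRatio a (-n) k)) +
      (∑ k ∈ range (n + 1), dougallTerm a a a n k -
        ∑ k ∈ range (n + 1), dougallTerm a c (-n) n k) := by
  simp only [← sum_sub_distrib, ← sum_add_distrib, dougallTerm]
  exact sum_congr rfl fun k _ ↦ by ring

variable [CharZero K] {a : K} (ha : ∀ i : ℕ, 1 + a + i ≠ 0)

include ha

lemma wellPoisedRatio_neg_natCast_eq (n k : ℕ) :
    wellPoisedRatio a (-n) k = wellPoisedRatio a (-(n + 1 : ℕ)) k *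
      ((n + 1 - k) * (1 + a + n + k) / ((n + 1) * (1 + a + n))) := by
  have h := wellPoisedRatio_add_one_mul (a := a) (b := -(n + 1 : ℕ)) (k := k) fun h ↦ by
    obtain ⟨i, -, hi⟩ := (ascPochhammer_eval_eq_zero_iff _ _).1 h
    refine ha (n + i) ?_
    push_cast at hi ⊢
    linear_combination hi
  have hn : (n + 1 : K) ≠ 0 := n.cast_add_one_ne_zero
  rw [mul_div_assoc', eq_div_iff (mul_ne_zero hn (ha n)),
    show (-n : K) = -(n + 1 : ℕ) + 1 by push_cast; ring]
  push_cast at h ⊢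
  linear_combination -h

/-- The closed form is the telescoping certificate of Dougall's sum in the direction of `n`; it
vanishes at `m = n + 1`. -/
lemma sum_dougallTerm_succ_sub {b c : K} {n m : ℕ}
    (hb : (ascPochhammer K (n + 1)).eval (1 + a - b) ≠ 0)
    (hc : (ascPochhammer K (n + 1)).eval (1 + a - c) ≠ 0) (hm : m ≤ n + 1) :
    ∑ k ∈ range (m + 1), (dougallTerm a b c (n + 1) k -
        (1 + a + n) * (1 + a - b - c + n) / ((1 + a - b + n) * (1 + a - c + n)) *
          dougallTerm a b c n k) =
      (a + m) * (b + m) * (c + m) * (n + 1 - m) /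
          ((n + 1) * (1 + a - b + n) * (1 + a - c + n)) *
        (wellPoisedRatio a a m * wellPoisedRatio a b m * wellPoisedRatio a c m *
          wellPoisedRatio a (-(n + 1 : ℕ)) m) := by
  have hbi {i : ℕ} := add_natCast_ne_zero_of_ascPochhammer_eval_ne_zero (i := i) hb
  have hci {i : ℕ} := add_natCast_ne_zero_of_ascPochhammer_eval_ne_zero (i := i) hc
  have hbn := hbi n.lt_succ_self
  have hcn := hci n.lt_succ_self
  have hn : (n + 1 : K) ≠ 0 := n.cast_add_one_ne_zero
  have han := ha n
  simp only [dougallTerm, wellPoisedRatio_neg_natCast_eq ha n]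
  induction m with
  | zero =>
    simp only [zero_add, sum_range_one, wellPoisedRatio_zero, Nat.cast_zero]
    field_simp
    ring
  | succ m ih =>
    have hbm := hbi hm
    have hcm := hci hm
    have ham : 2 + a + n + m ≠ 0 := fun h ↦ ha (n + 1 + m) (by push_cast; linear_combination h)
    have hm' : (m + 1 : K) ≠ 0 := m.cast_add_one_ne_zero
    rw [sum_range_succ, ih (by omega)]
    simp only [wellPoisedRatio_succ]
    push_cast
    rw [show 1 + a - a + (m : K) = m + 1 by ring,
      show 1 + a - -(n + 1 : K) + m = 2 + a + n + m by ring]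
    field_simp
    ring

theorem sum_dougallTerm {b c : K} {n : ℕ}
    (hb : (ascPochhammer K n).eval (1 + a - b) ≠ 0)
    (hc : (ascPochhammer K n).eval (1 + a - c) ≠ 0) :
    ∑ k ∈ range (n + 1), dougallTerm a b c n k =
      (ascPochhammer K (n + 1)).eval a * (ascPochhammer K n).eval (1 + a - b - c) /
        ((ascPochhammer K n).eval (1 + a - b) * (ascPochhammer K n).eval (1 + a - c)) := by
  induction n with
  | zero => simp [dougallTerm, wellPoisedRatio_zero]
  | succ n ih =>
    have recurrence := sum_dougallTerm_succ_sub ha hb hc le_rfl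
    have last_eq_zero : dougallTerm a b c n (n + 1) = 0 := by
      rw [dougallTerm, wellPoisedRatio_neg_natCast_of_lt a n.lt_succ_self, mul_zero, mul_zero]
    rw [sum_sub_distrib, ← mul_sum, sum_range_succ (dougallTerm a b c n), last_eq_zero, add_zero,
      Nat.cast_add_one, sub_self, mul_zero, zero_div, zero_mul, sub_eq_zero] at recurrence
    rw [ascPochhammer_succ_eval] at hb hc
    rw [recurrence, ih (left_ne_zero_of_mul hb) (left_ne_zero_of_mul hc), div_mul_div_comm]
    simp only [ascPochhammer_succ_eval]
    push_cast
    congr 1 <;> ring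

lemma sum_dougallTerm_add_sub {y : K} {n : ℕ}
    (hy : (ascPochhammer K n).eval (1 - y) * (ascPochhammer K n).eval (1 + y) ≠ 0) :
    ∑ k ∈ range (n + 1), dougallTerm a (a + y) (a - y) n k =
      (ascPochhammer K (n + 1)).eval a * (ascPochhammer K n).eval (1 - a) /
        ((ascPochhammer K n).eval (1 - y) * (ascPochhammer K n).eval (1 + y)) := by
  have hsub : 1 + a - (a + y) = 1 - y := by ring
  have hadd : 1 + a - (a - y) = 1 + y := by ring
  rw [sum_dougallTerm ha (hsub ▸ left_ne_zero_of_mul hy) (hadd ▸ right_ne_zero_of_mul hy), hsub,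
    hadd, show 1 - y - (a - y) = 1 - a by ring]

lemma sum_dougallTerm_self_add {n : ℕ} (hn : (ascPochhammer K n).eval (1 - (a + n)) ≠ 0) :
    ∑ k ∈ range (n + 1), dougallTerm a a (a + (a + n)) n k =
      (a + n) * (ascPochhammer K n).eval (2 * a) / n.factorial := by
  have hone : 1 + a - a = 1 := by ring
  have hsub : 1 + a - (a + (a + n)) = 1 - (a + n) := by ring
  have hfact : (n.factorial : K) ≠ 0 := Nat.cast_ne_zero.2 n.factorial_ne_zero
  rw [sum_dougallTerm ha (by rwa [hone, ascPochhammer_eval_one]) (by rwa [hsub]), hone, hsub,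
    show 1 - (a + (a + n)) = 1 - 2 * a - n by ring, ascPochhammer_eval_one,
    ascPochhammer_eval_one_sub_sub, ascPochhammer_succ_eval]
  rw [← sub_sub, ascPochhammer_eval_one_sub_sub] at hn ⊢
  have hsign := left_ne_zero_of_mul hn
  have hpoch := right_ne_zero_of_mul hn
  field_simp

end WellPoised

section Valuation

variable {R Γ₀ : Type*} [CommRing R] [LinearOrderedCommMonoidWithZero Γ₀] (v : Valuation R Γ₀)

lemma valuation_natCast_le_one (n : ℕ) : v n ≤ 1 := by
  induction n with
  | zero => simp
  | succ n ih => simpa using v.map_add_le ih v.map_one.le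

variable {v}

lemma valuation_mul_le_of_le_one_left {x y : R} {γ : Γ₀} (hx : v x ≤ 1) (hy : v y ≤ γ) :
    v (x * y) ≤ γ := by
  rw [map_mul]
  exact mul_le_of_le_one_of_le hx hy

lemma valuation_mul_sub_mul_le {x y z w : R} {γ : Γ₀} (hy : v y ≤ 1) (hz : v z ≤ 1)
    (hxz : v (x - z) ≤ γ) (hyw : v (y - w) ≤ γ) : v (x * y - z * w) ≤ γ := by
  rw [show x * y - z * w = y * (x - z) + z * (y - w) by ring]
  exact v.map_add_le (valuation_mul_le_of_le_one_left hy hxz)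
    (valuation_mul_le_of_le_one_left hz hyw)

lemma valuation_ascPochhammer_eval_le_one {x : R} (hx : v x ≤ 1) (k : ℕ) :
    v ((ascPochhammer R k).eval x) ≤ 1 := by
  induction k with
  | zero => simp
  | succ k ih =>
    rw [ascPochhammer_succ_eval]
    exact valuation_mul_le_of_le_one_left ih (v.map_add_le hx (valuation_natCast_le_one v k))

lemma valuation_ascPochhammer_eval_sub_le {x y : R} (hx : v x ≤ 1) (hy : v y ≤ 1) (k : ℕ) :
    v ((ascPochhammer R k).eval x - (ascPochhammer R k).eval y) ≤ v (x - y) := by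
  induction k with
  | zero => simp
  | succ k ih =>
    simp only [ascPochhammer_succ_eval]
    refine valuation_mul_sub_mul_le (v.map_add_le hx (valuation_natCast_le_one v k))
      (valuation_ascPochhammer_eval_le_one hy k) ih ?_
    rw [add_sub_add_right_eq_sub]

lemma valuation_ascPochhammer_eval_add_mul_sub_sub_sq_le {x y : R} (hx : v x ≤ 1) (hy : v y ≤ 1)
    (k : ℕ) :
    v ((ascPochhammer R k).eval (x + y) * (ascPochhammer R k).eval (x - y) -
      (ascPochhammer R k).eval x ^ 2) ≤ v y ^ 2 := by
  induction k with
  | zero => simp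
  | succ k ih =>
    have hk := valuation_natCast_le_one v k
    have hP := valuation_ascPochhammer_eval_le_one hx k
    simp only [ascPochhammer_succ_eval, mul_pow, mul_mul_mul_comm _ (x + y + (k : R))]
    refine valuation_mul_sub_mul_le ?_ ?_ ih ?_
    · rw [map_mul]
      exact mul_le_one' (v.map_add_le (v.map_add_le hx hy) hk)
        (v.map_add_le (v.map_sub_le hx hy) hk)
    · rw [map_pow]
      exact pow_le_one' hP 2
    · rw [show (x + y + k) * (x - y + k) - (x + k) ^ 2 = -y ^ 2 by ring, v.map_neg, map_pow]

end Valuation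

section ValuedField

variable {K Γ₀ : Type*} [Field K] [LinearOrderedCommGroupWithZero Γ₀] {v : Valuation K Γ₀}

lemma valuation_div_sub_div_le {x y z w : K} {γ : Γ₀} (hz : v z ≤ 1) (hy : v y = 1) (hw : v w = 1)
    (hxz : v (x - z) ≤ γ) (hyw : v (y - w) ≤ γ) : v (x / y - z / w) ≤ γ := by
  have hy0 : y ≠ 0 := v.ne_zero_iff.1 (by simp [hy])
  have hw0 : w ≠ 0 := v.ne_zero_iff.1 (by simp [hw])
  rw [div_sub_div _ _ hy0 hw0, map_div₀, map_mul, hy, hw, mul_one, div_one, mul_comm y]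
  exact valuation_mul_sub_mul_le hw.le hz hxz (v.map_sub_swap y w ▸ hyw)

lemma valuation_ascPochhammer_eval_one_sub {y : K} {k : ℕ} (hk : v (k.factorial : K) = 1)
    (hy : v y < 1) : v ((ascPochhammer K k).eval (1 - y)) = 1 := by
  rw [← ascPochhammer_eval_one K] at hk
  rw [← hk]
  refine v.map_eq_of_sub_lt ((valuation_ascPochhammer_eval_sub_le ?_ v.map_one.le k).trans_lt ?_)
  · exact (v.map_one_sub_of_lt hy).le
  · rwa [sub_sub_cancel_left, v.map_neg, hk]

lemma valuation_factorial_eq_one_of_le {n k : ℕ} (hn : v (n.factorial : K) = 1) (hkn : k ≤ n) :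
    v (k.factorial : K) = 1 := by
  obtain ⟨d, hd⟩ := Nat.factorial_dvd_factorial hkn
  refine (valuation_natCast_le_one v _).antisymm ?_
  rw [← hn, hd, Nat.cast_mul, map_mul]
  exact mul_le_of_le_one_right' (valuation_natCast_le_one v d)

end ValuedField

section Supercongruence

variable {K Γ₀ : Type*} [Field K] [LinearOrderedCommGroupWithZero Γ₀] {v : Valuation K Γ₀}
  {a y : K} {n k : ℕ}

lemma valuation_wellPoisedRatio_self_le_one (ha : v a ≤ 1) (hk : v (k.factorial : K) = 1) :
    v (wellPoisedRatio a a k) ≤ 1 := by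
  rw [wellPoisedRatio_self, map_div₀, hk, div_one]
  exact valuation_ascPochhammer_eval_le_one ha k

lemma valuation_wellPoisedRatio_self_sub_le (ha : v a ≤ 1) (hy : v y < 1)
    (hk : v (k.factorial : K) = 1) :
    v (wellPoisedRatio a a k - wellPoisedRatio a (a + y) k) ≤ v y := by
  have hay := v.map_add_le ha hy.le
  rw [wellPoisedRatio_self, wellPoisedRatio_add]
  refine valuation_div_sub_div_le (valuation_ascPochhammer_eval_le_one hay k) hk
    (valuation_ascPochhammer_eval_one_sub hk hy) ?_ ?_
  · simpa using valuation_ascPochhammer_eval_sub_le ha hay k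
  · rw [← ascPochhammer_eval_one K]
    simpa using valuation_ascPochhammer_eval_sub_le v.map_one.le (v.map_one_sub_of_lt hy).le k

lemma valuation_factorial_sq_sub_le (hy : v y ≤ 1) (k : ℕ) :
    v ((k.factorial : K) ^ 2 -
      (ascPochhammer K k).eval (1 - y) * (ascPochhammer K k).eval (1 + y)) ≤ v y ^ 2 := by
  rw [← ascPochhammer_eval_one K, v.map_sub_swap, mul_comm]
  exact valuation_ascPochhammer_eval_add_mul_sub_sub_sq_le v.map_one.le hy k

lemma valuation_ascPochhammer_eval_one_sub_mul_one_add (hk : v (k.factorial : K) = 1)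
    (hy : v y < 1) :
    v ((ascPochhammer K k).eval (1 - y) * (ascPochhammer K k).eval (1 + y)) = 1 := by
  rw [map_mul, valuation_ascPochhammer_eval_one_sub hk hy, ← sub_neg_eq_add,
    valuation_ascPochhammer_eval_one_sub hk (v.map_neg y ▸ hy), mul_one]

lemma valuation_wellPoisedRatio_self_sq_sub_le (ha : v a ≤ 1) (hy : v y < 1)
    (hk : v (k.factorial : K) = 1) :
    v (wellPoisedRatio a a k ^ 2 - wellPoisedRatio a (a + y) k * wellPoisedRatio a (a - y) k) ≤
      v y ^ 2 := by
  rw [wellPoisedRatio_self, wellPoisedRatio_add, sub_eq_add_neg a, wellPoisedRatio_add,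
    sub_neg_eq_add, ← sub_eq_add_neg, div_pow, div_mul_div_comm]
  refine valuation_div_sub_div_le ?_ (by rw [map_pow, hk, one_pow])
    (valuation_ascPochhammer_eval_one_sub_mul_one_add hk hy) ?_
    (valuation_factorial_sq_sub_le hy.le k)
  · rw [map_mul]
    exact mul_le_one' (valuation_ascPochhammer_eval_le_one (v.map_add_le ha hy.le) k)
      (valuation_ascPochhammer_eval_le_one (v.map_sub_le ha hy.le) k)
  · rw [v.map_sub_swap]
    exact valuation_ascPochhammer_eval_add_mul_sub_sub_sq_le ha hy.le k

variable [CharZero K]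

lemma valuation_sum_dougallTerm_sub_le (ha : ∀ i : ℕ, 1 + a + i ≠ 0)
    (ha1 : v a ≤ 1) (hy : v y < 1) (hn : v (n.factorial : K) = 1) :
    v (∑ k ∈ range (n + 1), dougallTerm a a a n k -
      ∑ k ∈ range (n + 1), dougallTerm a (a + y) (a - y) n k) ≤ v (a + n) * v y ^ 2 := by
  have hden := valuation_ascPochhammer_eval_one_sub_mul_one_add hn hy
  have hne := v.ne_zero_iff.1 (hden ▸ one_ne_zero)
  have at_zero := sum_dougallTerm_add_sub ha (y := 0) (n := n) (by simp [Nat.factorial_ne_zero])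
  simp only [add_zero, sub_zero, ascPochhammer_eval_one, ← pow_two] at at_zero
  rw [at_zero, sum_dougallTerm_add_sub ha hne, ascPochhammer_succ_eval, mul_comm _ (a + (n : K)),
    mul_assoc, mul_div_assoc (a + (n : K)), mul_div_assoc (a + (n : K)), ← mul_sub, map_mul]
  refine mul_le_mul_right ?_ _
  refine valuation_div_sub_div_le ?_ (by rw [map_pow, hn, one_pow]) hden (by simp)
    (valuation_factorial_sq_sub_le hy.le n)
  rw [map_mul]
  exact mul_le_one' (valuation_ascPochhammer_eval_le_one ha1 n)
    (valuation_ascPochhammer_eval_le_one (v.map_sub_le v.map_one.le ha1) n)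

theorem valuation_sum_ascPochhammer_div_factorial_pow_four_sub_le (ha : ∀ i : ℕ, 1 + a + i ≠ 0)
    (han : v (a + n) < 1) (hn : v (n.factorial : K) = 1) :
    v (∑ k ∈ range (n + 1), (a + 2 * k) * ((ascPochhammer K k).eval a / k.factorial) ^ 4 -
      (a + n) * (ascPochhammer K n).eval (2 * a) / n.factorial) ≤ v (a + n) ^ 3 := by
  have ha1 : v a ≤ 1 := by simpa using v.map_sub_le han.le (valuation_natCast_le_one v n)
  have hne : (ascPochhammer K n).eval (1 - (a + n)) ≠ 0 :=
    v.ne_zero_iff.1 (valuation_ascPochhammer_eval_one_sub hn han ▸ one_ne_zero)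
  have neg_eq : (-n : K) = a - (a + n) := by ring
  simp only [← wellPoisedRatio_self]
  rw [← sum_dougallTerm_self_add ha hne, sum_wellPoisedRatio_pow_four_sub_sum_dougallTerm, neg_eq,
    pow_succ']
  refine v.map_add_le (v.map_sum_le fun k hk ↦ ?_) (valuation_sum_dougallTerm_sub_le ha ha1 han hn)
  have hk1 := valuation_factorial_eq_one_of_le hn (Nat.lt_succ_iff.1 (mem_range.1 hk))
  have hcoeff : v (a + 2 * k) ≤ 1 := by
    exact_mod_cast v.map_add_le ha1 (valuation_natCast_le_one v (2 * k))
  refine valuation_mul_le_of_le_one_left (valuation_mul_le_of_le_one_left hcoeff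
    (valuation_wellPoisedRatio_self_le_one ha1 hk1)) ?_
  rw [map_mul]
  refine mul_le_mul' ?_ (valuation_wellPoisedRatio_self_sq_sub_le ha1 han hk1)
  rw [sub_eq_add_neg a, ← v.map_neg (a + n)]
  exact valuation_wellPoisedRatio_self_sub_le ha1 ((v.map_neg _).trans_lt han) hk1

end Supercongruence

lemma halfPoch_eq_ascPochhammer_eval (k : ℕ) : halfPoch k = (ascPochhammer ℚ k).eval (1 / 2) := by
  induction k with
  | zero => simp [halfPoch]
  | succ k ih => rw [ascPochhammer_succ_eval, ← ih, halfPoch, halfPoch, prod_range_succ]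

lemma exists_eq_pow_mul_of_padicValuation_le {p : ℕ} [Fact p.Prime] {q : ℚ} {m : ℕ}
    (h : Rat.padicValuation p q ≤ Rat.padicValuation p p ^ m) :
    ∃ t : ℚ, q = p ^ m * t ∧ ¬ p ∣ t.den := by
  have hp : (p : ℚ) ≠ 0 := Nat.cast_ne_zero.2 (NeZero.ne p)
  refine ⟨q / p ^ m, (mul_div_cancel₀ _ (pow_ne_zero m hp)).symm, ?_⟩
  rw [← Rat.padicValuation_le_one_iff, map_div₀, map_pow]
  exact div_le_one_of_le₀ h zero_le

lemma padicValuation_self_lt_one (p : ℕ) [Fact p.Prime] : Rat.padicValuation p p < 1 := by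
  rw [← Int.cast_natCast, Rat.padicValuation_cast, Int.padicValuation_lt_one_iff]

lemma padicValuation_natCast_eq_one {p : ℕ} [Fact p.Prime] {m : ℕ} (h : ¬ p ∣ m) :
    Rat.padicValuation p m = 1 := by
  rw [← Int.cast_natCast, Rat.padicValuation_cast, Int.padicValuation_eq_one_iff]
  exact_mod_cast h

theorem stmt11_general (p : ℕ) (hp : p.Prime) (hp2 : p ≠ 2) :
    ∃ t : ℚ,
      (∑ k ∈ Finset.range ((p - 1) / 2 + 1),
          ((4 * k + 1 : ℚ)) * (halfPoch k) ^ 4 / ((k.factorial : ℚ)) ^ 4) - p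
        = (p : ℚ) ^ 3 * t ∧ ¬ (p ∣ t.den) := by
  have : Fact p.Prime := ⟨hp⟩
  obtain ⟨n, hn⟩ : Odd p := hp.odd_of_ne_two hp2
  have half_add : (1 / 2 + n : ℚ) = p / 2 := by rw [hn]; push_cast; ring
  have val_two : Rat.padicValuation p 2 = 1 :=
    padicValuation_natCast_eq_one (m := 2) (by rwa [Nat.prime_dvd_prime_iff_eq hp Nat.prime_two])
  have val_factorial : Rat.padicValuation p (n.factorial : ℚ) = 1 :=
    padicValuation_natCast_eq_one (by rw [hp.dvd_factorial]; omega)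
  have val_half_add : Rat.padicValuation p (1 / 2 + n) = Rat.padicValuation p p := by
    rw [half_add, map_div₀, val_two, div_one]
  have supercongruence := valuation_sum_ascPochhammer_div_factorial_pow_four_sub_le
    (a := (1 / 2 : ℚ)) (fun i ↦ by positivity)
    (val_half_add.trans_lt (padicValuation_self_lt_one p)) val_factorial
  rw [val_half_add, half_add, mul_one_div_cancel two_ne_zero, ascPochhammer_eval_one,
    mul_div_cancel_right₀ _ (Nat.cast_ne_zero.2 n.factorial_ne_zero)] at supercongruence
  apply exists_eq_pow_mul_of_padicValuation_le
  convert valuation_mul_le_of_le_one_left val_two.le supercongruence using 2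
  rw [mul_sub, mul_div_cancel₀ _ two_ne_zero, mul_sum, show (p - 1) / 2 = n by omega]
  congr! 2 with k
  rw [halfPoch_eq_ascPochhammer_eval]
  ring

theorem stmt11 (p : ℕ) (hp : p.Prime) (hp3 : 3 < p) :
    ∃ t : ℚ,
      (∑ k ∈ Finset.range ((p - 1) / 2 + 1),
          ((4 * k + 1 : ℚ)) * (halfPoch k) ^ 4 / ((k.factorial : ℚ)) ^ 4) - p
        = (p : ℚ) ^ 3 * t ∧ ¬ (p ∣ t.den) :=
  stmt11_general p hp (by omega)
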